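/- Let (B,+,∘) be a right brace and for a ∈ B define λᵒᵖ_a : B → B by λᵒᵖ_a(b) = b∘a − a. Then each λᵒᵖ_a is a bijection, and the operation a·b := (λᵒᵖ_a)^{-1}(b) makes (B,+,·) a linear cycle set whose adjoint multiplication a^b + b (where a^b = σ_b^{-1}(a) = λᵒᵖ_b(a)) coincides with the brace multiplication ∘. Consequently, the assignment of theorem sending a linear cycle set (A,+,·) to the right brace (A,+,∘) is a bijection between linear cycle set structures and right brace structures on a given abelian group. -/

import Mathlib

/-- A right brace: `(B,+)` is an abelian group, `(B,∘)` is a group, and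
`(a+b)∘c + c = a∘c + b∘c`. -/
class RightBrace (B : Type*) extends AddCommGroup B where
  circ : B → B → B
  circ_assoc : ∀ a b c : B, circ (circ a b) c = circ a (circ b c)
  cone : B
  circ_cone : ∀ a : B, circ a cone = a
  cone_circ : ∀ a : B, circ cone a = a
  cinv : B → B
  circ_cinv : ∀ a : B, circ a (cinv a) = cone
  cinv_circ : ∀ a : B, circ (cinv a) a = cone
  right_brace : ∀ a b c : B, circ (a + b) c + c = circ a c + circ b c

/-- The opposite lambda map of a right brace: `λᵒᵖ_a(b) = b∘a − a`. -/
def lamop {B : Type*} [RightBrace B] (a b : B) : B := RightBrace.circ b a - a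

/-- The cycle set operation `a·b := (λᵒᵖ_a)⁻¹(b)` of a right brace. -/
noncomputable def dotOp {B : Type*} [RightBrace B] (a b : B) : B :=
  Function.invFun (lamop a) b

/-- A linear cycle set structure on an abelian group `A`: a binary operation
with bijective left multiplications satisfying the cycle set identity and the
linearity laws. -/
structure LcsOn (A : Type*) [AddCommGroup A] where
  smul : A → A → A
  bij : ∀ a : A, Function.Bijective (smul a)
  cyc : ∀ a b c : A, smul (smul a b) (smul a c) = smul (smul b a) (smul b c)
  ldist : ∀ a b c : A, smul a (b + c) = smul a b + smul a c
  rlaw : ∀ a b c : A, smul (a + b) c = smul (smul a b) (smul a c)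

/-- A right brace structure on an abelian group `A`: an operation `∘` making
`A` a group and satisfying `(a+b)∘c + c = a∘c + b∘c`. -/
structure RbOn (A : Type*) [AddCommGroup A] where
  circ : A → A → A
  assoc : ∀ a b c : A, circ (circ a b) c = circ a (circ b c)
  isGroup : ∃ e : A, (∀ a : A, circ a e = a ∧ circ e a = a) ∧
    ∀ a : A, ∃ b : A, circ a b = e ∧ circ b a = e
  rbrace : ∀ a b c : A, circ (a + b) c + c = circ a c + circ b c

section rb
variable {B : Type} [RightBrace B]
open RightBrace

theorem rb_zero_circ (c : B) : circ 0 c = c := by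
  have h := right_brace (0 : B) 0 c
  rw [add_zero] at h
  exact (add_left_cancel h).symm

theorem rb_cone : (cone : B) = 0 := by
  rw [← rb_zero_circ (cone : B), circ_cone]

theorem rb_lam_bij (a : B) : Function.Bijective (lamop a) := by
  constructor
  · intro x y h
    have h' : circ x a = circ y a := sub_left_injective h
    have h2 := congrArg (fun t => circ t (cinv a)) h'
    simpa only [circ_assoc, circ_cinv, circ_cone] using h2
  · intro y
    refine ⟨circ (y + a) (cinv a), ?_⟩
    simp only [lamop, circ_assoc, cinv_circ, circ_cone, add_sub_cancel_right]

theorem rb_lam_add (a b c : B) : lamop a (b + c) = lamop a b + lamop a c := by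
  have h := right_brace b c a
  have h' := eq_sub_of_add_eq h
  simp only [lamop, h']
  abel

theorem rb_lam_circ (a b : B) : lamop b a + b = circ a b := by
  simp [lamop]

theorem rb_lam_dot (a b : B) : lamop a (dotOp a b) = b :=
  Function.rightInverse_invFun (rb_lam_bij a).2 b

theorem rb_dot_lam (a b : B) : dotOp a (lamop a b) = b :=
  Function.leftInverse_invFun (rb_lam_bij a).1 b

theorem rb_lam_mul (a b c : B) : lamop (circ a b) c = lamop b (lamop a c) := by
  have h : circ (circ c a) b = circ c (circ a b) := circ_assoc c a b
  rw [← rb_lam_circ c a, ← rb_lam_circ _ b, rb_lam_add, add_assoc, rb_lam_circ a b,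
    ← rb_lam_circ c (circ a b)] at h
  exact (add_right_cancel h).symm

theorem rb_dot_bij (a : B) : Function.Bijective (dotOp a) :=
  ⟨(show Function.LeftInverse (lamop a) (dotOp a) from rb_lam_dot a).injective,
   (show Function.RightInverse (lamop a) (dotOp a) from rb_dot_lam a).surjective⟩

theorem rb_dot_add (a b c : B) : dotOp a (b + c) = dotOp a b + dotOp a c := by
  apply (rb_lam_bij a).1
  rw [rb_lam_add, rb_lam_dot, rb_lam_dot, rb_lam_dot]

theorem rb_rlaw (a b c : B) : dotOp (a + b) c = dotOp (dotOp a b) (dotOp a c) := by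
  apply (rb_lam_bij (a + b)).1
  have h : a + b = circ (dotOp a b) a := by
    rw [← rb_lam_circ, rb_lam_dot, add_comm]
  rw [rb_lam_dot, h, rb_lam_mul, rb_lam_dot, rb_lam_dot]

theorem rb_cyc (a b c : B) :
    dotOp (dotOp a b) (dotOp a c) = dotOp (dotOp b a) (dotOp b c) := by
  rw [← rb_rlaw, ← rb_rlaw, add_comm]

theorem rb_inv (a b : B) : Function.invFun (dotOp b) a = lamop b a := by
  apply (rb_dot_bij b).1
  rw [Function.rightInverse_invFun (rb_dot_bij b).2 a, rb_dot_lam]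
end rb

section lcs
variable {A : Type} [AddCommGroup A]

/-- Inverse of left multiplication. -/
noncomputable def lcsTau (L : LcsOn A) (b a : A) : A := Function.invFun (L.smul b) a

theorem lcs_st (L : LcsOn A) (b a : A) : L.smul b (lcsTau L b a) = a :=
  Function.rightInverse_invFun (L.bij b).2 a

theorem lcs_ts (L : LcsOn A) (b a : A) : lcsTau L b (L.smul b a) = a :=
  Function.leftInverse_invFun (L.bij b).1 a

theorem lcs_tau_add (L : LcsOn A) (a b c : A) :
    lcsTau L a (b + c) = lcsTau L a b + lcsTau L a c := by
  apply (L.bij a).1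
  rw [L.ldist, lcs_st, lcs_st, lcs_st]

theorem lcs_tau_zero (L : LcsOn A) (a : A) : lcsTau L a 0 = 0 := by
  have h := lcs_tau_add L a 0 0
  simpa using h

theorem lcs_zero_tau (L : LcsOn A) (a : A) : lcsTau L 0 a = a := by
  have h0 : L.smul 0 0 = 0 := by
    have h := L.ldist 0 0 0
    simpa using h
  have h := L.rlaw 0 0 a
  rw [add_zero, h0] at h
  have h2 := (L.bij 0).1 h
  conv_lhs => rw [h2]
  rw [lcs_ts]

theorem lcs_tau_mul (L : LcsOn A) (a b c : A) :
    lcsTau L (lcsTau L b a + b) c = lcsTau L b (lcsTau L a c) := by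
  apply (L.bij (lcsTau L b a + b)).1
  rw [lcs_st, add_comm, L.rlaw, lcs_st, lcs_st, lcs_st]

theorem lcs_assoc (L : LcsOn A) (a b c : A) :
    lcsTau L c (lcsTau L b a + b) + c
      = lcsTau L (lcsTau L c b + c) a + (lcsTau L c b + c) := by
  rw [lcs_tau_mul, lcs_tau_add, add_assoc]

theorem lcs_left (L : LcsOn A) (a : A) : ∃ x, lcsTau L a x + a = 0 :=
  ⟨L.smul a (-a), by rw [lcs_ts, neg_add_cancel]⟩

/-- Adjoint right brace. -/
noncomputable def lcsToRb (L : LcsOn A) : RbOn A where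
  circ a b := lcsTau L b a + b
  assoc a b c := lcs_assoc L a b c
  isGroup := by
    refine ⟨0, fun a => ⟨by rw [lcs_zero_tau, add_zero], by rw [lcs_tau_zero, zero_add]⟩, ?_⟩
    intro a
    obtain ⟨x, hx⟩ := lcs_left L a
    obtain ⟨y, hy⟩ := lcs_left L x
    refine ⟨x, ?_, hx⟩
    have h := lcs_assoc L y x a
    rw [hy, hx, lcs_tau_zero, zero_add, lcs_zero_tau, add_zero] at h
    rw [h, hy]
  rbrace a b c := by
    rw [lcs_tau_add]; abel

/-- Bundled right brace from a right brace structure. -/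
noncomputable abbrev rbOnToRb (R : RbOn A) : RightBrace A :=
  { (inferInstance : AddCommGroup A) with
    circ := R.circ
    circ_assoc := R.assoc
    cone := R.isGroup.choose
    circ_cone := fun a => (R.isGroup.choose_spec.1 a).1
    cone_circ := fun a => (R.isGroup.choose_spec.1 a).2
    cinv := fun a => (R.isGroup.choose_spec.2 a).choose
    circ_cinv := fun a => (R.isGroup.choose_spec.2 a).choose_spec.1
    cinv_circ := fun a => (R.isGroup.choose_spec.2 a).choose_spec.2
    right_brace := R.rbrace }

/-- Linear cycle set from a right brace structure. -/
noncomputable def rbToLcs (R : RbOn A) : LcsOn A where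
  smul := @dotOp A (rbOnToRb R)
  bij := @rb_dot_bij A (rbOnToRb R)
  cyc := @rb_cyc A (rbOnToRb R)
  ldist := @rb_dot_add A (rbOnToRb R)
  rlaw := @rb_rlaw A (rbOnToRb R)

theorem rbOn_ext (R S : RbOn A) (h : R.circ = S.circ) : R = S := by
  cases R; cases S; cases h; rfl

theorem lcsOn_ext (R S : LcsOn A) (h : R.smul = S.smul) : R = S := by
  cases R; cases S; cases h; rfl

theorem lcsToRb_bij : Function.Bijective (lcsToRb (A := A)) := by
  constructor
  · intro L M h
    apply lcsOn_ext
    have ht : ∀ b a, lcsTau L b a = lcsTau M b a := fun b a =>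
      add_right_cancel (congrFun (congrFun (congrArg RbOn.circ h) a) b :
        lcsTau L b a + b = lcsTau M b a + b)
    funext b a
    apply (Function.LeftInverse.injective (g := M.smul b) (lcs_st M b) : 
      Function.Injective (lcsTau M b))
    rw [lcs_ts, ← ht, lcs_ts]
  · intro R
    refine ⟨rbToLcs R, rbOn_ext _ _ ?_⟩
    funext a b
    have h1 := @rb_inv A (rbOnToRb R) a b
    have h2 := @rb_lam_circ A (rbOnToRb R) a b
    rw [← h1] at h2
    exact h2
end lcs

/-- Every right brace `(B,+,∘)` gives a linear cycle set via
`a·b := (λᵒᵖ_a)⁻¹(b)` with `λᵒᵖ_a(b) = b∘a − a`, whose adjoint multiplication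
`a^b + b` (with `a^b = σ_b⁻¹(a) = λᵒᵖ_b(a)`) is `∘`; consequently, on any
abelian group, the assignment sending a linear cycle set structure to its
adjoint right brace structure is a bijection. -/
theorem stmt_17 :
    (∀ (B : Type) [inst : RightBrace B],
      (∀ a : B, Function.Bijective (lamop a)) ∧
      (∀ a : B, Function.Bijective (dotOp a)) ∧
      (∀ x y z : B,
        dotOp (dotOp x y) (dotOp x z) = dotOp (dotOp y x) (dotOp y z)) ∧
      (∀ a b c : B, dotOp a (b + c) = dotOp a b + dotOp a c) ∧
      (∀ a b c : B, dotOp (a + b) c = dotOp (dotOp a b) (dotOp a c)) ∧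
      (∀ a b : B, Function.invFun (dotOp b) a = lamop b a) ∧
      (∀ a b : B, lamop b a + b = RightBrace.circ a b)) ∧
    (∀ (A : Type) [inst : AddCommGroup A],
      ∃ F : LcsOn A → RbOn A,
        (∀ (L : LcsOn A) (a b : A),
          (F L).circ a b = Function.invFun (L.smul b) a + b) ∧
        Function.Bijective F) := by
  exact ⟨fun B _ => ⟨rb_lam_bij, rb_dot_bij, rb_cyc, rb_dot_add, rb_rlaw, rb_inv, rb_lam_circ⟩,
    fun A _ => ⟨lcsToRb, fun _ _ _ => rfl, lcsToRb_bij⟩⟩
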